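/- arXiv:0905.1118 — 2 statements merged into one kernel-verified Lean document; each statement's English description precedes it below -/
import Mathlib

section
/- Let T, W ∈ 𝒯 with W contained in T. If W contains extensions of both ⟨0,1⟩ and ⟨1,0⟩, and 2|T/u| ≤ |T/v| holds for all interior elements u <_lex v of W, then |T/⟨0,1⟩| < |T/⟨1,0⟩|. -/
/-- The (strict) lexicographic order on finite binary sequences, with `false < true`. -/
def lexLt (u v : List Bool) : Prop := List.Lex (· < ·) u v

/-- `t` is an initial segment of the infinite binary sequence `x`. -/
def StreamPrefix (t : List Bool) (x : ℕ → Bool) : Prop :=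
  ∀ i : Fin t.length, t.get i = x i

/-- `T` is a finite rooted binary tree, identified with the (finite) set of addresses of
its leaves: every infinite binary sequence has a unique initial segment in `T`. -/
def IsTree (T : Finset (List Bool)) : Prop :=
  ∀ x : ℕ → Bool, ∃! t, t ∈ T ∧ StreamPrefix t x

/-- `U` is contained in `V`: every element of `U` has an extension in `V`. -/
def ContainedIn (U V : Finset (List Bool)) : Prop :=
  ∀ u ∈ U, ∃ v ∈ V, u <+: v

/-- `T/u = {s : u⌢s ∈ T}`. -/
def treeQuot (T : Finset (List Bool)) (u : List Bool) : Finset (List Bool) :=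
  (T.filter (fun t => u <+: t)).image (fun t => t.drop u.length)

/-- `u` is an interior element of `T`: an element of `T` which is neither the
lexicographically least nor the lexicographically greatest element of `T`. -/
def IsInterior (T : Finset (List Bool)) (u : List Bool) : Prop :=
  u ∈ T ∧ (∃ a ∈ T, lexLt a u) ∧ (∃ b ∈ T, lexLt u b)

/-- `U` satisfies the defining conditions for `∂T`: `U` is a tree contained in `T`;
(1) `U` contains extensions of both `⟨0,1⟩` and `⟨1,0⟩`;
(2) either `2|T/u| ≤ |T/v|` for all interior `u <_lex v` of `U`, or `2|T/v| ≤ |T/u|`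
for all interior `u <_lex v` of `U`;
(3) the minimum interior element of `U` ends with `1` and the maximum interior element
of `U` ends with `0`. -/
def DefCondDT (T U : Finset (List Bool)) : Prop :=
  IsTree U ∧ ContainedIn U T ∧
  (∃ u ∈ U, [false, true] <+: u) ∧ (∃ u ∈ U, [true, false] <+: u) ∧
  ((∀ u v, IsInterior U u → IsInterior U v → lexLt u v →
      2 * (treeQuot T u).card ≤ (treeQuot T v).card) ∨
   (∀ u v, IsInterior U u → IsInterior U v → lexLt u v →
      2 * (treeQuot T v).card ≤ (treeQuot T u).card)) ∧
  (∀ u, IsInterior U u → (∀ v, IsInterior U v → ¬ lexLt v u) → u.getLast? = some true) ∧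
  (∀ u, IsInterior U u → (∀ v, IsInterior U v → ¬ lexLt u v) → u.getLast? = some false)

theorem sp_of_prefix {u t : List Bool} (h : u <+: t) :
    StreamPrefix u (fun i => t.getD i false) := by
  obtain ⟨s, rfl⟩ := h
  rintro ⟨i, hi⟩
  simp [List.getElem?_append_left hi, List.getElem?_eq_getElem hi]

theorem prefix_of_sp {u v : List Bool} {x : ℕ → Bool} (hu : StreamPrefix u x)
    (hv : StreamPrefix v x) (hl : u.length ≤ v.length) : u <+: v := by
  rw [List.prefix_iff_eq_take]
  apply List.ext_getElem
  · simp [hl]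
  · intro i h1 h2
    have a := hu ⟨i, h1⟩
    have b := hv ⟨i, by omega⟩
    simp only [List.get_eq_getElem] at a b
    simp [a, b]

theorem tree_antichain {T : Finset (List Bool)} (hT : IsTree T) {u v : List Bool}
    (hu : u ∈ T) (hv : v ∈ T) (h : u <+: v) : u = v :=
  (hT (fun i => v.getD i false)).unique ⟨hu, sp_of_prefix h⟩
    ⟨hv, sp_of_prefix (List.prefix_refl v)⟩

theorem treeQuot_card (T : Finset (List Bool)) (u : List Bool) :
    (treeQuot T u).card = (T.filter (fun t => u <+: t)).card := by
  unfold treeQuot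
  apply Finset.card_image_of_injOn
  intro a ha b hb hab
  simp only [Finset.coe_filter, Set.mem_setOf_eq] at ha hb
  obtain ⟨s, rfl⟩ := ha.2
  obtain ⟨r, rfl⟩ := hb.2
  simpa using hab

theorem exists_lt {W : Finset (List Bool)} (hW : IsTree W) {w : List Bool} (hw : w ∈ W)
    (h : [false, true] <+: w) : ∃ a ∈ W, lexLt a w := by
  obtain ⟨a, ⟨ha, hs⟩, -⟩ := hW (fun _ => false)
  refine ⟨a, ha, ?_⟩
  obtain ⟨s, rfl⟩ := h
  match a, ha, hs with
  | [], ha, hs => exact List.Lex.nil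
  | [p], ha, hs =>
    have := hs ⟨0, by simp⟩
    simp at this
    subst this
    exact List.Lex.cons List.Lex.nil
  | p :: q :: r, ha, hs =>
    have h0 := hs ⟨0, by simp⟩
    have h1 := hs ⟨1, by simp⟩
    simp at h0 h1
    subst h0 h1
    exact List.Lex.cons (List.Lex.rel (by decide))

theorem exists_gt {W : Finset (List Bool)} (hW : IsTree W) {w : List Bool} (hw : w ∈ W)
    (h : [true, false] <+: w) : ∃ a ∈ W, lexLt w a := by
  obtain ⟨a, ⟨ha, hs⟩, -⟩ := hW (fun _ => true)
  refine ⟨a, ha, ?_⟩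
  obtain ⟨s, rfl⟩ := h
  match a, ha, hs with
  | [], ha, hs => exact absurd (tree_antichain hW ha hw List.nil_prefix) (by simp)
  | [p], ha, hs =>
    have := hs ⟨0, by simp⟩
    simp at this
    subst this
    exact absurd (tree_antichain hW ha hw ⟨false :: s, rfl⟩) (by simp)
  | p :: q :: r, ha, hs =>
    have h0 := hs ⟨0, by simp⟩
    have h1 := hs ⟨1, by simp⟩
    simp at h0 h1
    subst h0 h1
    exact List.Lex.cons (List.Lex.rel (by decide))

theorem lt_01_10 {u v : List Bool} (hu : [false, true] <+: u) (hv : [true, false] <+: v) :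
    lexLt u v := by
  obtain ⟨s, rfl⟩ := hu
  obtain ⟨r, rfl⟩ := hv
  exact List.Lex.rel (by decide)

theorem sum_lt_doubling (f : List Bool → ℕ) (P : List Bool → Prop) (hpos : ∀ u, P u → 0 < f u)
    (hm : ∀ u v, P u → P v → lexLt u v → 2 * f u ≤ f v) (S : Finset (List Bool)) :
    (∀ u ∈ S, P u) → ∀ v, P v → (∀ u ∈ S, lexLt u v) → ∑ u ∈ S, f u < f v := by
  induction S using Finset.induction_on_max with
  | empty => intro _ v hv _; simpa using hpos v hv
  | insert m S hlt ih =>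
    intro hP v hv hl
    rw [Finset.sum_insert (fun h => lt_irrefl _ (hlt m h))]
    have h1 := ih (fun u hu => hP u (Finset.mem_insert_of_mem hu)) m
      (hP m (Finset.mem_insert_self _ _)) (fun u hu => hlt u hu)
    have h2 := hm m v (hP m (Finset.mem_insert_self _ _)) hv (hl m (Finset.mem_insert_self _ _))
    omega

/-- If `W` is a tree contained in `T`, contains extensions of both `⟨0,1⟩` and `⟨1,0⟩`,
and `2|T/u| ≤ |T/v|` holds for all interior elements `u <_lex v` of `W`, then
`|T/⟨0,1⟩| < |T/⟨1,0⟩|`. -/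
theorem quot_card_lt_of_monotone (T W : Finset (List Bool))
    (hT : IsTree T) (hW : IsTree W) (hcont : ContainedIn W T)
    (h01 : ∃ w ∈ W, [false, true] <+: w) (h10 : ∃ w ∈ W, [true, false] <+: w)
    (hmono : ∀ u v, IsInterior W u → IsInterior W v → lexLt u v →
      2 * (treeQuot T u).card ≤ (treeQuot T v).card) :
    (treeQuot T [false, true]).card < (treeQuot T [true, false]).card := by
  obtain ⟨w0, hw0, hp0⟩ := h01
  obtain ⟨v, hv, hpv⟩ := h10
  have hiv : IsInterior W v := ⟨hv, ⟨w0, hw0, lt_01_10 hp0 hpv⟩, exists_gt hW hv hpv⟩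
  have hpos : ∀ u, IsInterior W u → 0 < (treeQuot T u).card := by
    intro u hu
    obtain ⟨t, ht, hut⟩ := hcont u hu.1
    rw [treeQuot_card]
    exact Finset.card_pos.2 ⟨t, Finset.mem_filter.2 ⟨ht, hut⟩⟩
  have key := sum_lt_doubling (fun u => (treeQuot T u).card) (IsInterior W) hpos hmono
    (W.filter (fun w => [false, true] <+: w))
    (fun u hu => by
      rw [Finset.mem_filter] at hu
      exact ⟨hu.1, exists_lt hW hu.1 hu.2, ⟨v, hv, lt_01_10 hu.2 hpv⟩⟩)
    v hiv (fun u hu => lt_01_10 (Finset.mem_filter.1 hu).2 hpv)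
  have hle : (treeQuot T v).card ≤ (treeQuot T [true, false]).card := by
    rw [treeQuot_card, treeQuot_card]
    apply Finset.card_le_card
    intro t ht
    rw [Finset.mem_filter] at ht ⊢
    exact ⟨ht.1, hpv.trans ht.2⟩
  refine lt_of_le_of_lt ?_ (lt_of_lt_of_le key hle)
  simp only [treeQuot_card]
  refine le_trans (Finset.card_le_card ?_) Finset.card_biUnion_le
  intro t ht
  rw [Finset.mem_filter] at ht
  obtain ⟨htT, htp⟩ := ht
  rw [Finset.mem_biUnion]
  obtain ⟨w, ⟨hw, hs⟩, -⟩ := hW (fun i => t.getD i false)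
  have hst := sp_of_prefix (List.prefix_refl t)
  have hs01 := sp_of_prefix htp
  refine ⟨w, Finset.mem_filter.2 ⟨hw, ?_⟩, Finset.mem_filter.2 ⟨htT, ?_⟩⟩
  · rcases le_total w.length [false, true].length with h | h
    · have h1 := prefix_of_sp hs hs01 h
      rw [tree_antichain hW hw hw0 (h1.trans hp0)]
      exact hp0
    · exact prefix_of_sp hs01 hs h
  · rcases le_total w.length t.length with h | h
    · exact prefix_of_sp hs hst h
    · have h1 := prefix_of_sp hst hs h
      obtain ⟨t', ht', hwt⟩ := hcont w hw
      have h2 := tree_antichain hT htT ht' (h1.trans hwt)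
      rw [h2]
      exact hwt
end

section
/- Let T ∈ 𝒯 and suppose U ∈ 𝒯 satisfies the defining conditions for ∂T and has n elements. Then T has more than 2^{n−2} elements. In particular, if ∂T has n elements then |T| > 2^{n−2}. -/
theorem doubling_sum_max {α : Type*} [LinearOrder α] (f : α → ℕ) (S : Finset α) :
    (∀ u ∈ S, 1 ≤ f u) → (∀ u ∈ S, ∀ v ∈ S, u < v → 2 * f u ≤ f v) →
    2 ^ S.card ≤ ∑ u ∈ S, f u + 1 ∧
      ∀ m, 1 ≤ m → (∀ u ∈ S, 2 * f u ≤ m) → 2 ^ S.card ≤ m := by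
  induction S using Finset.induction_on_max with
  | empty => intro _ _; simp
  | insert a S ha ih =>
    intro h1 h2
    have hna : a ∉ S := fun h => lt_irrefl _ (ha a h)
    obtain ⟨i1, i2⟩ := ih (fun u hu => h1 u (Finset.mem_insert_of_mem hu))
      (fun u hu v hv => h2 u (Finset.mem_insert_of_mem hu) v (Finset.mem_insert_of_mem hv))
    have hfa := i2 (f a) (h1 a (Finset.mem_insert_self _ _))
      (fun u hu => h2 u (Finset.mem_insert_of_mem hu) a (Finset.mem_insert_self _ _) (ha u hu))
    rw [Finset.card_insert_of_notMem hna, Finset.sum_insert hna, pow_succ]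
    refine ⟨by omega, fun m _ hm => ?_⟩
    have := hm a (Finset.mem_insert_self _ _)
    omega

theorem IsTree.eq_of_prefix {U : Finset (List Bool)} (hU : IsTree U) {u v : List Bool}
    (hu : u ∈ U) (hv : v ∈ U) (h : u <+: v) : u = v := by
  have hx : ∀ w : List Bool, w <+: v → StreamPrefix w (fun i => v.getD i false) := by
    intro w hw i
    have hi : (i : ℕ) < v.length := lt_of_lt_of_le i.2 hw.length_le
    simp only [List.get_eq_getElem, List.getD_eq_getElem _ _ hi]
    exact hw.getElem i.2
  obtain ⟨t, _, ht⟩ := hU (fun i => v.getD i false)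
  rw [ht u ⟨hu, hx u h⟩, ht v ⟨hv, hx v List.prefix_rfl⟩]

theorem sum_treeQuot_le {T U : Finset (List Bool)} (hU : IsTree U) :
    ∑ u ∈ U, (treeQuot T u).card ≤ T.card := by
  calc ∑ u ∈ U, (treeQuot T u).card
      ≤ ∑ u ∈ U, (T.filter (fun t => u <+: t)).card :=
        Finset.sum_le_sum fun u _ => Finset.card_image_le
    _ = (U.biUnion fun u => T.filter (fun t => u <+: t)).card := by
        rw [Finset.card_biUnion]
        intro u hu v hv huv
        simp only [Function.onFun, Finset.disjoint_left]
        intro t h1 h2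
        rw [Finset.mem_filter] at h1 h2
        rcases List.prefix_or_prefix_of_prefix h1.2 h2.2 with h | h
        · exact huv (hU.eq_of_prefix hu hv h)
        · exact huv (hU.eq_of_prefix hv hu h).symm
    _ ≤ T.card := Finset.card_le_card (by
        intro t ht
        simp only [Finset.mem_biUnion, Finset.mem_filter] at ht
        obtain ⟨_, _, h, _⟩ := ht
        exact h)

/-- If `U` satisfies the defining conditions for `∂T` and has `n` elements, then `T` has
more than `2^(n-2)` elements. In particular `|T| > 2^(|∂T|-2)`. -/
theorem card_gt_of_defCond (T U : Finset (List Bool)) (hT : IsTree T)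
    (hU : DefCondDT T U) :
    2 ^ (U.card - 2) < T.card := by
  obtain ⟨hUt, hc, ⟨p, hp, hp'⟩, ⟨q, hq, hq'⟩, hd, -, -⟩ := hU
  have hpq : p ≠ q := by
    rintro rfl
    obtain ⟨a, rfl⟩ := hp'
    obtain ⟨b, hb⟩ := hq'
    simp at hb
  have hpos : ∀ u ∈ U, 1 ≤ (treeQuot T u).card := by
    intro u hu
    obtain ⟨t, ht, hut⟩ := hc u hu
    exact Finset.card_pos.2 ⟨_, Finset.mem_image_of_mem _ (Finset.mem_filter.2 ⟨ht, hut⟩)⟩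
  have hne : U.Nonempty := ⟨p, hp⟩
  have hlt : U.min' hne < U.max' hne := Finset.min'_lt_max' U hp hq hpq
  have ha := U.min'_mem hne
  have hb := U.max'_mem hne
  have hmin : ∀ u ∈ U, U.min' hne ≤ u := fun u hu => U.min'_le u hu
  have hmax : ∀ u ∈ U, u ≤ U.max' hne := fun u hu => U.le_max' u hu
  generalize U.min' hne = a at *
  generalize U.max' hne = b at *
  have hb2 : b ∈ U.erase a := Finset.mem_erase.2 ⟨hlt.ne', hb⟩
  have hint : ∀ u ∈ (U.erase a).erase b, IsInterior U u := by
    intro u hu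
    simp only [Finset.mem_erase] at hu
    obtain ⟨h1, h2, h3⟩ := hu
    exact ⟨h3, ⟨a, ha, lt_of_le_of_ne (hmin u h3) (Ne.symm h2)⟩,
      ⟨b, hb, lt_of_le_of_ne (hmax u h3) h1⟩⟩
  have hcard : ((U.erase a).erase b).card = U.card - 2 := by
    rw [Finset.card_erase_of_mem hb2, Finset.card_erase_of_mem ha]
    omega
  have key : 2 ^ ((U.erase a).erase b).card
      ≤ ∑ u ∈ (U.erase a).erase b, (treeQuot T u).card + 1 := by
    rcases hd with hd | hd
    · exact (doubling_sum_max (fun u => (treeQuot T u).card) _ (fun u hu => hpos u (hint u hu).1)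
        (fun u hu v hv h => hd u v (hint u hu) (hint v hv) h)).1
    · exact (doubling_sum_max (α := (List Bool)ᵒᵈ) (fun u => (treeQuot T u).card)
        ((U.erase a).erase b) (fun u hu => hpos u (hint u hu).1)
        (fun u hu v hv h => hd v u (hint v hv) (hint u hu) h)).1
  rw [hcard] at key
  have hs := sum_treeQuot_le (T := T) hUt
  rw [← Finset.add_sum_erase _ _ ha, ← Finset.add_sum_erase _ _ hb2] at hs
  have := hpos a ha
  have := hpos b hb
  omega
end
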